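/- arXiv:1706.06297 — 3 statements merged into one kernel-verified Lean document; each statement's English description precedes it below -/
import Mathlib

section
/- Let H be a real Hilbert space, f : H → ℝ a convex function, μ > 0 and x ∈ H. Let z* be the minimizer of z ↦ f(z) + (1/(2μ))‖z − x‖², and let g be any subgradient of f at x (i.e. f(y) ≥ f(x) + ⟨g, y − x⟩ for all y ∈ H). Then (1/μ)‖x − z*‖ ≤ ‖g‖; equivalently, the gradient of the Moreau envelope satisfies ‖∇f_μ(x)‖ ≤ ‖g‖. -/
open scoped RealInnerProductSpace

/-- Lemma 1 (bounding the gradient of the Moreau envelope by a subgradient):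
if `zstar` minimizes `z ↦ f z + 1/(2μ) ‖z - x‖²` and `g` is a subgradient of the
convex function `f` at `x`, then `(1/μ) ‖x - zstar‖ ≤ ‖g‖`, i.e.
`‖∇f_μ(x)‖ ≤ ‖g‖`. -/
theorem stmt_0
    {H : Type*} [NormedAddCommGroup H] [InnerProductSpace ℝ H] [CompleteSpace H]
    (f : H → ℝ) (hconv : ConvexOn ℝ Set.univ f)
    (μ : ℝ) (hμ : 0 < μ) (x : H)
    (zstar : H)
    (hzstar : IsMinOn (fun z => f z + 1 / (2 * μ) * ‖z - x‖ ^ 2) Set.univ zstar)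
    (g : H) (hg : ∀ y : H, f y ≥ f x + ⟪g, y - x⟫) :
    (1 / μ) * ‖x - zstar‖ ≤ ‖g‖ := by
  by_contra hcon
  push Not at hcon
  obtain ⟨d, hd⟩ : ∃ d, d = ‖x - zstar‖ := ⟨_, rfl⟩
  obtain ⟨G, hG⟩ : ∃ G, G = ‖g‖ := ⟨_, rfl⟩
  have hG0 : 0 ≤ G := hG ▸ norm_nonneg g
  have hd0 : 0 ≤ d := hd ▸ norm_nonneg _
  rw [← hd, ← hG] at hcon
  obtain ⟨e, he⟩ : ∃ e, e = 1 / μ * d := ⟨_, rfl⟩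
  rw [← he] at hcon
  have he0 : 0 < e := lt_of_le_of_lt hG0 hcon
  have hde : d = μ * e := by rw [he]; field_simp
  have hdpos : 0 < d := by rw [hde]; positivity
  have hsub : f x - G * d ≤ f zstar := by
    have h1 := hg zstar
    have h2 := abs_real_inner_le_norm g (zstar - x)
    rw [norm_sub_rev zstar x, ← hd, ← hG] at h2
    have h3 := (abs_le.mp h2).1
    linarith
  have key : ∀ t : ℝ, 0 < t → t ≤ 1 → f zstar - f x + (1 - t / 2) * (e * d) ≤ 0 := by
    intro t ht ht1
    have hc := hconv.2 (Set.mem_univ zstar) (Set.mem_univ x) (sub_nonneg.mpr ht1) ht.le (by ring)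
    have hm := hzstar (Set.mem_univ ((1 - t) • zstar + t • x))
    simp only [Set.mem_setOf_eq, smul_eq_mul] at hc hm
    have hv : (1 - t) • zstar + t • x - x = (1 - t) • (zstar - x) := by module
    rw [hv, norm_smul, Real.norm_eq_abs, mul_pow, sq_abs, norm_sub_rev zstar x, ← hd] at hm
    have hq : 1 / (2 * μ) * d ^ 2 = e * d / 2 := by rw [he]; field_simp
    have hq2 : 1 / (2 * μ) * ((1 - t) ^ 2 * d ^ 2) = (1 - t) ^ 2 * (e * d / 2) := by
      rw [← hq]; ring
    rw [hq, hq2] at hm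
    have : t * (f zstar - f x + (1 - t / 2) * (e * d)) ≤ 0 := by nlinarith
    by_contra hh
    push Not at hh
    linarith [mul_pos ht hh]
  have hk := key ((e - G) / e) (div_pos (by linarith) he0) (by rw [div_le_one he0]; linarith)
  have hr : (1 - (e - G) / e / 2) * (e * d) = (e + G) / 2 * d := by field_simp; ring
  rw [hr] at hk
  nlinarith [mul_pos (sub_pos.mpr hcon) hdpos]
end

section
/- Let (Ω, P) be a probability space, σ : Ω → [0, ∞) a random variable, μ₀ > 0, γ ∈ (0,1], and k ≥ 1 an integer. Then E[(1 + (μ₀/k^γ) σ)^{−2}] ≤ ( E[(1 + μ₀σ)^{−2}] )^{1/k^γ}. -/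
open MeasureTheory

/-- For a nonnegative random variable `σ`, `μ₀ > 0`, `γ ∈ (0,1]` and integer `k ≥ 1`:
`E[(1 + (μ₀/k^γ) σ)⁻²] ≤ (E[(1 + μ₀ σ)⁻²])^(1/k^γ)`. -/
theorem stmt_10
    {Ω : Type*} [MeasurableSpace Ω] (P : Measure Ω) [IsProbabilityMeasure P]
    (σ : Ω → ℝ) (hσmeas : Measurable σ) (hσ0 : ∀ S, 0 ≤ σ S)
    (μ₀ : ℝ) (hμ₀ : 0 < μ₀) (γ : ℝ) (hγ0 : 0 < γ) (hγ1 : γ ≤ 1)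
    (k : ℕ) (hk : 1 ≤ k) :
    (∫ S, (1 / (1 + μ₀ / (k : ℝ) ^ γ * σ S)) ^ 2 ∂P) ≤
      (∫ S, (1 / (1 + μ₀ * σ S)) ^ 2 ∂P) ^ (1 / (k : ℝ) ^ γ) := by
  have hk1 : (1 : ℝ) ≤ (k : ℝ) := by exact_mod_cast hk
  have ha : (1 : ℝ) ≤ (k : ℝ) ^ γ := Real.one_le_rpow hk1 hγ0.le
  generalize (k : ℝ) ^ γ = a at ha
  have ha0 : 0 < a := by linarith
  have hp0 : 0 ≤ 1 / a := by positivity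
  have hp1 : 1 / a ≤ 1 := by rw [div_le_one ha0]; exact ha
  have key : ∀ c : ℝ, 0 ≤ c → ∀ S, 0 ≤ (1 / (1 + c * σ S)) ^ 2 ∧ (1 / (1 + c * σ S)) ^ 2 ≤ 1 := by
    intro c hc S
    have h : 0 ≤ c * σ S := mul_nonneg hc (hσ0 S)
    have h1 : 1 / (1 + c * σ S) ≤ 1 := by
      rw [div_le_one (by linarith)]; linarith
    exact ⟨by positivity, pow_le_one₀ (by positivity) h1⟩
  have int : ∀ f : Ω → ℝ, Measurable f → (∀ S, 0 ≤ f S ∧ f S ≤ 1) → Integrable f P := by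
    intro f hf hb
    refine Integrable.of_bound hf.aestronglyMeasurable 1 (Filter.Eventually.of_forall fun S => ?_)
    rw [Real.norm_eq_abs, abs_of_nonneg (hb S).1]
    exact (hb S).2
  have m1 : ∀ c : ℝ, Measurable fun S => (1 / (1 + c * σ S)) ^ 2 := by
    intro c
    fun_prop
  have i0 := int _ (m1 (μ₀ / a)) (key _ (by positivity))
  have i1 := int _ (m1 μ₀) (key _ hμ₀.le)
  have i2 : Integrable (fun S => ((1 / (1 + μ₀ * σ S)) ^ 2) ^ (1 / a)) P := by
    refine int _ ((m1 μ₀).pow_const _) fun S => ?_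
    have := key _ hμ₀.le S
    exact ⟨Real.rpow_nonneg this.1 _, Real.rpow_le_one this.1 this.2 hp0⟩
  refine (integral_mono i0 i2 fun S => ?_).trans ?_
  · have hx : 0 ≤ μ₀ * σ S := mul_nonneg hμ₀.le (hσ0 S)
    have hb := rpow_one_add_le_one_add_mul_self (s := μ₀ * σ S) (by linarith) hp0 hp1
    have hpos : 0 < (1 + μ₀ * σ S) ^ (1 / a) := Real.rpow_pos_of_pos (by linarith) _
    have e : ((1 / (1 + μ₀ * σ S)) ^ 2) ^ (1 / a) = (1 / (1 + μ₀ * σ S) ^ (1 / a)) ^ 2 := by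
      rw [← Real.rpow_pow_comm (by positivity), Real.div_rpow zero_le_one (by linarith),
        Real.one_rpow]
    have e2 : 1 + μ₀ / a * σ S = 1 + 1 / a * (μ₀ * σ S) := by ring
    change (1 / (1 + μ₀ / a * σ S)) ^ 2 ≤ ((1 / (1 + μ₀ * σ S)) ^ 2) ^ (1 / a)
    rw [e, e2]
    have := one_div_le_one_div_of_le hpos hb
    have h3 : 0 ≤ 1 / (1 + 1 / a * (μ₀ * σ S)) := by positivity
    exact pow_le_pow_left₀ h3 this 2
  · exact (Real.concaveOn_rpow hp0 hp1).le_map_integral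
      (Real.continuous_rpow_const hp0).continuousOn isClosed_Ici
      (Filter.Eventually.of_forall fun S => (key _ hμ₀.le S).1) i1 i2
end

section
/- (Lemma 11.) Let (Ω, P) be a probability space, σ : Ω → [0, ∞) a random variable, γ ∈ (0,1], μ₀ > 0 and μ_k = μ₀/k^γ for k ≥ 1. Then for all integers q ≥ p ≥ 1: ∏_{i=p}^{q} E[(1 + μ_i σ)^{−2}] ≤ ( E[(1 + μ₀σ)^{−2}] )^{φ_{1−γ}(q+1) − φ_{1−γ}(p)}. -/
open MeasureTheory

/-- `φ_α(x) = (x^α - 1)/α` for `α ≠ 0`, `φ₀(x) = log x`. -/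
noncomputable def phi (α x : ℝ) : ℝ := if α = 0 then Real.log x else (x ^ α - 1) / α

lemma phi_step (γ : ℝ) (hγ0 : 0 < γ) (hγ1 : γ ≤ 1) (x : ℝ) (hx : 1 ≤ x) :
    phi (1 - γ) (x + 1) - phi (1 - γ) x ≤ 1 / x ^ γ := by
  have hx0 : 0 < x := by linarith
  have e : x + 1 = x * (1 + 1 / x) := by field_simp
  have h1x : 0 < 1 / x := by positivity
  unfold phi
  split_ifs with h
  · have : γ = 1 := by linarith
    subst this
    rw [e, Real.log_mul hx0.ne' (by positivity), Real.rpow_one]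
    have := Real.log_le_sub_one_of_pos (show 0 < 1 + 1 / x by positivity)
    linarith
  · have hb : 0 < 1 - γ := lt_of_le_of_ne (by linarith) (Ne.symm h)
    have h2 := rpow_one_add_le_one_add_mul_self (s := 1 / x) (by linarith) hb.le (by linarith)
    have h3 : x ^ (1 - γ) = x / x ^ γ := by rw [Real.rpow_sub hx0, Real.rpow_one]
    have h4 : (x + 1) ^ (1 - γ) ≤ x ^ (1 - γ) * (1 + (1 - γ) * (1 / x)) := by
      rw [e, Real.mul_rpow hx0.le (by positivity)]
      gcongr
    have hxg : 0 < x ^ γ := by positivity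
    have h5 : x ^ (1 - γ) * (1 + (1 - γ) * (1 / x)) = x ^ (1 - γ) + (1 - γ) * (1 / x ^ γ) := by
      rw [h3]; field_simp
    rw [← sub_div, div_le_iff₀ hb]
    linarith

section
variable {Ω : Type*} [MeasurableSpace Ω] (P : Measure Ω) [IsProbabilityMeasure P]
    (σ : Ω → ℝ) (hσmeas : Measurable σ) (hσ0 : ∀ S, 0 ≤ σ S)

lemma f_bounds (hσ0 : ∀ S, 0 ≤ σ S) (m : ℝ) (hm : 0 ≤ m) (S : Ω) :
    0 < (1 / (1 + m * σ S)) ^ 2 ∧ (1 / (1 + m * σ S)) ^ 2 ≤ 1 := by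
  have : 0 ≤ m * σ S := mul_nonneg hm (hσ0 S)
  refine ⟨by positivity, pow_le_one₀ (by positivity) ?_⟩
  rw [div_le_one (by positivity)]; linarith

lemma f_int (hσmeas : Measurable σ) (hσ0 : ∀ S, 0 ≤ σ S) (m : ℝ) (hm : 0 ≤ m) :
    Integrable (fun S => (1 / (1 + m * σ S)) ^ 2) P := by
  refine Integrable.of_bound (C := 1) (Measurable.aestronglyMeasurable (by fun_prop)) ?_
  refine Filter.Eventually.of_forall fun S => ?_
  have := f_bounds σ hσ0 m hm S
  rw [Real.norm_of_nonneg this.1.le]; exact this.2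

lemma f_pos (hσmeas : Measurable σ) (hσ0 : ∀ S, 0 ≤ σ S) (m : ℝ) (hm : 0 ≤ m) :
    0 < ∫ S, (1 / (1 + m * σ S)) ^ 2 ∂P := by
  rw [integral_pos_iff_support_of_nonneg (fun S => (f_bounds σ hσ0 m hm S).1.le)
    (f_int P σ hσmeas hσ0 m hm)]
  have : Function.support (fun S => (1 / (1 + m * σ S)) ^ 2) = Set.univ := by
    ext S; simpa using (f_bounds σ hσ0 m hm S).1.ne'
  rw [this]; simp

lemma f_le_one (hσmeas : Measurable σ) (hσ0 : ∀ S, 0 ≤ σ S) (m : ℝ) (hm : 0 ≤ m) :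
    ∫ S, (1 / (1 + m * σ S)) ^ 2 ∂P ≤ 1 := by
  have := integral_mono (f_int P σ hσmeas hσ0 m hm) (integrable_const (1 : ℝ))
    (fun S => (f_bounds σ hσ0 m hm S).2)
  simpa using this

lemma f_jensen (hσmeas : Measurable σ) (hσ0 : ∀ S, 0 ≤ σ S) (m : ℝ) (hm : 0 ≤ m)
    (a : ℝ) (ha : 0 ≤ a) (ha1 : a ≤ 1) :
    ∫ S, (1 / (1 + m * a * σ S)) ^ 2 ∂P ≤ (∫ S, (1 / (1 + m * σ S)) ^ 2 ∂P) ^ a := by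
  have hint : Integrable (fun S => ((1 / (1 + m * σ S)) ^ 2) ^ a) P := by
    refine Integrable.of_bound (C := 1) (Measurable.aestronglyMeasurable (by fun_prop)) ?_
    refine Filter.Eventually.of_forall fun S => ?_
    have := f_bounds σ hσ0 m hm S
    rw [Real.norm_of_nonneg (Real.rpow_nonneg this.1.le _)]
    exact Real.rpow_le_one this.1.le this.2 ha
  have hJ : ∫ S, ((1 / (1 + m * σ S)) ^ 2) ^ a ∂P ≤ (∫ S, (1 / (1 + m * σ S)) ^ 2 ∂P) ^ a :=
    (Real.concaveOn_rpow ha ha1).le_map_integral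
      (continuousOn_id.rpow_const (fun _ _ => Or.inr ha)) isClosed_Ici
      (Filter.Eventually.of_forall fun S => (f_bounds σ hσ0 m hm S).1.le)
      (f_int P σ hσmeas hσ0 m hm) hint
  refine (integral_mono (f_int P σ hσmeas hσ0 _ (mul_nonneg hm ha)) hint fun S => ?_).trans hJ
  have h0 : 0 ≤ m * σ S := mul_nonneg hm (hσ0 S)
  have hb := rpow_one_add_le_one_add_mul_self (s := m * σ S) (by linarith) ha ha1
  have hp : 0 < (1 + m * σ S) ^ a := by positivity
  have e : ((1 / (1 + m * σ S)) ^ 2) ^ a = (1 / (1 + m * σ S) ^ a) ^ 2 := by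
    rw [← Real.rpow_pow_comm (by positivity), Real.div_rpow (by positivity) (by positivity),
      Real.one_rpow]
  have e2 : 1 + m * a * σ S = 1 + a * (m * σ S) := by ring
  simp only [e, e2]
  gcongr

end

/-- Lemma 11: for the stepsizes `μ_k = μ₀/k^γ` with `γ ∈ (0,1]`, and integers `q ≥ p ≥ 1`:
`∏_{i=p}^{q} E[(1 + μ_i σ)⁻²] ≤ (E[(1 + μ₀ σ)⁻²])^(φ_{1-γ}(q+1) - φ_{1-γ}(p))`. -/
theorem stmt_11
    {Ω : Type*} [MeasurableSpace Ω] (P : Measure Ω) [IsProbabilityMeasure P]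
    (σ : Ω → ℝ) (hσmeas : Measurable σ) (hσ0 : ∀ S, 0 ≤ σ S)
    (γ : ℝ) (hγ0 : 0 < γ) (hγ1 : γ ≤ 1)
    (μ₀ : ℝ) (hμ₀ : 0 < μ₀)
    (μ : ℕ → ℝ) (hμ : ∀ k : ℕ, 1 ≤ k → μ k = μ₀ / (k : ℝ) ^ γ)
    (p q : ℕ) (hp : 1 ≤ p) (hpq : p ≤ q) :
    (∏ i ∈ Finset.Icc p q, ∫ S, (1 / (1 + μ i * σ S)) ^ 2 ∂P) ≤
      (∫ S, (1 / (1 + μ₀ * σ S)) ^ 2 ∂P) ^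
        (phi (1 - γ) ((q : ℝ) + 1) - phi (1 - γ) (p : ℝ)) := by
  set E := ∫ S, (1 / (1 + μ₀ * σ S)) ^ 2 ∂P with hE
  have hE0 : 0 < E := f_pos P σ hσmeas hσ0 μ₀ hμ₀.le
  have hE1 : E ≤ 1 := f_le_one P σ hσmeas hσ0 μ₀ hμ₀.le
  have key : ∀ k : ℕ, 1 ≤ k → ∫ S, (1 / (1 + μ k * σ S)) ^ 2 ∂P ≤
      E ^ (phi (1 - γ) ((k : ℝ) + 1) - phi (1 - γ) (k : ℝ)) := by
    intro k hk
    have hk' : (1 : ℝ) ≤ k := by exact_mod_cast hk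
    have hkg : (1 : ℝ) ≤ (k : ℝ) ^ γ := Real.one_le_rpow hk' hγ0.le
    have h := f_jensen P σ hσmeas hσ0 μ₀ hμ₀.le (1 / (k : ℝ) ^ γ) (by positivity)
      (by rw [div_le_one (by positivity)]; exact hkg)
    rw [hμ k hk, div_eq_mul_one_div μ₀]
    exact h.trans (Real.rpow_le_rpow_of_exponent_ge hE0 hE1 (phi_step γ hγ0 hγ1 _ hk'))
  induction q, hpq using Nat.le_induction with
  | base => simpa using key p hp
  | succ n hn ih =>
    rw [Finset.prod_Icc_succ_top (by omega)]
    refine (mul_le_mul ih (key (n + 1) (by omega))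
      (integral_nonneg fun S => by positivity) (by positivity)).trans (le_of_eq ?_)
    rw [← Real.rpow_add hE0]
    push_cast
    ring_nf
end
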